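/- arXiv:1811.11360 — 2 statements merged into one kernel-verified Lean document; each statement's English description precedes it below -/
import Mathlib

section
/- If 1 > p₁ > p₂ > 0 and α > 0, then N_{α,p₁} ≤_conv N_{α,p₂}: setting p = p₂/p₁ and L = N_{α,p}, the variable N_{α,p₂} is distributed as N_{α,p₁} + (L + N_{L,p₁}), where L + N_{L,p₁} is nonnegative and independent of N_{α,p₁}. -/
open MeasureTheory ProbabilityTheory Real

/-- The negative binomial probability mass function with shape `α` and success probability `p`. -/
noncomputable def negBinomPMF (α p : ℝ) (k : ℕ) : ℝ :=
  Real.Gamma (k + α) / (Nat.factorial k * Real.Gamma α) * p ^ α * (1 - p) ^ k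

/-- The negative binomial distribution as a measure on `ℝ` supported on `ℕ`. -/
noncomputable def negBinomMeasure (α p : ℝ) : Measure ℝ :=
  Measure.sum fun k : ℕ => ENNReal.ofReal (negBinomPMF α p k) • Measure.dirac (k : ℝ)

/-- Convolution order: `ν` equals `μ` convolved with some nonnegative probability measure. -/
def ConvLE (μ ν : Measure ℝ) : Prop :=
  ∃ ρ : Measure ℝ, IsProbabilityMeasure ρ ∧ ρ (Set.Iio 0) = 0 ∧ ν = μ.conv ρ

/-- Usual stochastic order on measures. -/
def StochLE (μ ν : Measure ℝ) : Prop := ∀ t : ℝ, μ (Set.Ici t) ≤ ν (Set.Ici t)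

/-!
Let `L ∼ N_{r,p}` and, given `L = l`, let `X ∼ N_{l,q}`. Adding an independent `N_{r,q}` to `l + X`
gives `l + N_{r+l,q}`, because negative binomials with a common success probability add their
shapes (Vandermonde). Averaging over `L` then gives `N_{r,pq}`: with `⟨r,k⟩ = C(k+r-1,k)` one has
`⟨r,l⟩ ⟨r+l,k⟩ = C(l+k,l) ⟨r,l+k⟩`, so the averaged mass at `n` contains the binomial expansion of
`((1-p)q + (1-q))^n = (1-pq)^n`.
-/

section Multichoose

open Finset.HasAntidiagonal (antidiagonal mem_antidiagonal)

variable {R : Type*} [CommRing R] [BinomialRing R]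

lemma multichoose_mul_multichoose_add_natCast (r : R) (l k : ℕ) :
    Ring.multichoose r l * Ring.multichoose (r + l) k =
      (l + k).choose l * Ring.multichoose r (l + k) := by
  have h := Ring.choose_add_smul_choose (r + l - 1) l k
  rw [← Nat.choose_symm_add, nsmul_eq_mul] at h
  rw [Ring.multichoose_eq, Ring.multichoose_eq, Ring.multichoose_eq, mul_comm, Nat.cast_add,
    ← add_assoc, ← sub_add_eq_add_sub, h]

lemma succ_mul_multichoose_succ (r : R) (k : ℕ) :
    (k + 1) * Ring.multichoose r (k + 1) = (r + k) * Ring.multichoose r k := by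
  have h := multichoose_mul_multichoose_add_natCast r k 1
  rw [Ring.multichoose_one_right, Nat.choose_succ_self_right, Nat.cast_add_one] at h
  rw [← h, mul_comm]

lemma multichoose_add (r s : R) (n : ℕ) :
    Ring.multichoose (r + s) n =
      ∑ x ∈ antidiagonal n, Ring.multichoose r x.1 * Ring.multichoose s x.2 := by
  have choose_neg (t : R) (k : ℕ) : Ring.choose (-t) k = (-1) ^ k * Ring.multichoose t k := by
    simp [Ring.choose_neg', Units.smul_def]
  have h := Ring.add_choose_eq n (Commute.all (-r) (-s))
  simp only [← neg_add, choose_neg] at h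
  have h_sign : ∑ x ∈ antidiagonal n,
      (-1) ^ x.1 * Ring.multichoose r x.1 * ((-1) ^ x.2 * Ring.multichoose s x.2) =
        (-1) ^ n * ∑ x ∈ antidiagonal n, Ring.multichoose r x.1 * Ring.multichoose s x.2 := by
    rw [Finset.mul_sum]
    refine Finset.sum_congr rfl fun x hx ↦ ?_
    rw [← mem_antidiagonal.1 hx, pow_add]
    ring
  rw [h_sign] at h
  exact ((isUnit_neg_one.pow n).mul_right_inj).1 h

lemma multichoose_nonneg [LinearOrder R] [IsStrictOrderedRing R] {r : R} (hr : 0 ≤ r) (k : ℕ) :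
    0 ≤ Ring.multichoose r k := by
  induction k with
  | zero => simp
  | succ k ih =>
    have h : 0 ≤ (k + 1) * Ring.multichoose r (k + 1) := by
      rw [succ_mul_multichoose_succ]
      positivity
    exact nonneg_of_mul_nonneg_right h (by positivity)

lemma Gamma_natCast_add_eq_multichoose {r : ℝ} (hr : ∀ m : ℕ, r ≠ -m) (k : ℕ) :
    Real.Gamma (k + r) = Ring.multichoose r k * (k.factorial * Real.Gamma r) := by
  induction k with
  | zero => simp
  | succ k ih =>
    have hk : (k : ℝ) + r ≠ 0 := fun h ↦ hr k (eq_neg_of_add_eq_zero_right h)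
    rw [Nat.cast_add_one, add_right_comm, Real.Gamma_add_one hk, ih, Nat.factorial_succ]
    push_cast
    linear_combination -(k.factorial * Real.Gamma r) * succ_mul_multichoose_succ r k

end Multichoose

section Convolution

variable {M ι : Type*} [AddMonoid M] [MeasurableSpace M] [MeasurableAdd₂ M]

lemma measureSum_conv (μ : ι → Measure M) (ν : Measure M) [SFinite ν] :
    Measure.sum μ ∗ ν = Measure.sum fun i ↦ μ i ∗ ν := by
  simp only [Measure.conv, Measure.prod_sum_left, Measure.map_sum measurable_add.aemeasurable]

lemma conv_measureSum [Countable ι] (μ : Measure M) (ν : ι → Measure M) [∀ i, SFinite (ν i)] :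
    μ ∗ Measure.sum ν = Measure.sum fun i ↦ μ ∗ ν i := by
  simp only [Measure.conv, Measure.prod_sum_right, Measure.map_sum measurable_add.aemeasurable]

end Convolution

section NatMassMeasure

open Finset.HasAntidiagonal (antidiagonal mem_antidiagonal)

/-- The measure on `ℝ` with mass `f k` at each natural number `k`; negative values of `f` count
as `0`. -/
noncomputable def natMassMeasure (f : ℕ → ℝ) : Measure ℝ :=
  Measure.sum fun k : ℕ ↦ ENNReal.ofReal (f k) • Measure.dirac (k : ℝ)

/-- The law of `L + X_L`, where `L` has mass function `w` on `ℕ` and, given `L = l`, the variable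
`X_L` has law `ν l`. -/
noncomputable def shiftMixture (w : ℕ → ℝ) (ν : ℕ → Measure ℝ) : Measure ℝ :=
  Measure.sum fun l : ℕ ↦ ENNReal.ofReal (w l) • (Measure.dirac (l : ℝ) ∗ ν l)

instance sFinite_natMassMeasure (f : ℕ → ℝ) : SFinite (natMassMeasure f) :=
  inferInstanceAs (SFinite (Measure.sum _))

lemma conv_shiftMixture (μ : Measure ℝ) [SFinite μ] (w : ℕ → ℝ) (ν : ℕ → Measure ℝ)
    [∀ l, SFinite (ν l)] :
    μ ∗ shiftMixture w ν = shiftMixture w fun l ↦ μ ∗ ν l := by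
  simp only [shiftMixture, conv_measureSum, Measure.conv_smul_right]
  congr! 3 with l
  rw [← Measure.conv_assoc, Measure.conv_comm μ, Measure.conv_assoc]

lemma natMassMeasure_conv (f : ℕ → ℝ) (ν : Measure ℝ) [SFinite ν] :
    natMassMeasure f ∗ ν = shiftMixture f fun _ ↦ ν := by
  simp only [natMassMeasure, shiftMixture, measureSum_conv, Measure.conv_smul_left]

lemma shiftMixture_natMassMeasure {w : ℕ → ℝ} {f : ℕ → ℕ → ℝ} (hw : ∀ l, 0 ≤ w l)
    (hf : ∀ l k, 0 ≤ f l k) :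
    shiftMixture w (fun l ↦ natMassMeasure (f l)) =
      natMassMeasure fun n ↦ ∑ x ∈ antidiagonal n, w x.1 * f x.1 x.2 := by
  refine Measure.ext_of_lintegral _ fun F hF ↦ ?_
  simp only [shiftMixture, natMassMeasure, lintegral_sum_measure, lintegral_smul_measure,
    Measure.lintegral_conv hF, lintegral_dirac, smul_eq_mul, ← ENNReal.tsum_mul_left]
  rw [← ENNReal.tsum_prod (f := fun l k : ℕ ↦
      ENNReal.ofReal (w l) * (ENNReal.ofReal (f l k) * F (l + k))),
    ← Finset.HasAntidiagonal.sigmaAntidiagonalEquivProd.tsum_eq, ENNReal.tsum_sigma']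
  refine tsum_congr fun n ↦ ?_
  rw [tsum_fintype, ENNReal.ofReal_sum_of_nonneg fun x _ ↦ mul_nonneg (hw _) (hf _ _),
    Finset.sum_mul, ← Finset.sum_coe_sort (antidiagonal n)]
  refine Finset.sum_congr rfl fun x _ ↦ ?_
  have hx : (n : ℝ) = x.1.1 + x.1.2 := by
    exact_mod_cast (mem_antidiagonal.1 x.2).symm
  rw [Finset.HasAntidiagonal.sigmaAntidiagonalEquivProd_apply, ENNReal.ofReal_mul (hw _),
    mul_assoc, hx]

lemma natMassMeasure_conv_natMassMeasure {f g : ℕ → ℝ} (hf : ∀ k, 0 ≤ f k) (hg : ∀ k, 0 ≤ g k) :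
    natMassMeasure f ∗ natMassMeasure g =
      natMassMeasure fun n ↦ ∑ x ∈ antidiagonal n, f x.1 * g x.2 := by
  rw [natMassMeasure_conv, shiftMixture_natMassMeasure hf fun _ ↦ hg]

lemma isProbabilityMeasure_shiftMixture {w : ℕ → ℝ} {ν : ℕ → Measure ℝ}
    [∀ l, IsProbabilityMeasure (ν l)] (hw : ∀ l, 0 ≤ w l) (hw_sum : HasSum w 1) :
    IsProbabilityMeasure (shiftMixture w ν) := by
  constructor
  simp only [shiftMixture, Measure.sum_apply _ MeasurableSet.univ, Measure.smul_apply,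
    measure_univ, smul_eq_mul, mul_one]
  rw [← ENNReal.ofReal_tsum_of_nonneg hw hw_sum.summable, hw_sum.tsum_eq, ENNReal.ofReal_one]

lemma isProbabilityMeasure_natMassMeasure {f : ℕ → ℝ} (hf : ∀ k, 0 ≤ f k) (hf_sum : HasSum f 1) :
    IsProbabilityMeasure (natMassMeasure f) := by
  rw [← Measure.conv_dirac_zero (natMassMeasure f), natMassMeasure_conv]
  exact isProbabilityMeasure_shiftMixture hf hf_sum

lemma natMassMeasure_Iio_zero (f : ℕ → ℝ) : natMassMeasure f (Set.Iio 0) = 0 := by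
  simp [natMassMeasure, measurableSet_Iio]

lemma shiftMixture_Iio_zero (w : ℕ → ℝ) {ν : ℕ → Measure ℝ} [∀ l, SFinite (ν l)]
    (hν : ∀ l, ν l (Set.Iio 0) = 0) :
    shiftMixture w ν (Set.Iio 0) = 0 := by
  have h_shift (l : ℕ) : (Measure.dirac (l : ℝ) ∗ ν l) (Set.Iio 0) = 0 := by
    rw [Measure.dirac_conv, Measure.map_apply (by fun_prop) measurableSet_Iio]
    refine measure_mono_null (fun x (hx : l + x < 0) ↦ ?_) (hν l)
    exact (le_add_of_nonneg_left l.cast_nonneg).trans_lt hx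
  simp [shiftMixture, measurableSet_Iio, h_shift]

end NatMassMeasure

section NegBinom

open Finset.HasAntidiagonal (antidiagonal mem_antidiagonal)

/-- The mass function of the negative binomial distribution `N_{r,p}`, with the coefficient
`C(k+r-1,k)` written as a polynomial in `r`. In contrast to `negBinomPMF`, where `Γ(0) = 0` makes
the mass function of shape `0` vanish, this gives `N_{0,p}` as the point mass at `0`. -/
noncomputable def negBinomMass (r p : ℝ) (k : ℕ) : ℝ :=
  Ring.multichoose r k * p ^ r * (1 - p) ^ k

/-- The law of `L + N_{L,q}` with `L` distributed as `N_{r,p}`. -/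
noncomputable def negBinomCompound (r p q : ℝ) : Measure ℝ :=
  shiftMixture (negBinomMass r p) fun l ↦ natMassMeasure (negBinomMass l q)

lemma negBinomPMF_eq_negBinomMass {α : ℝ} (hα : ∀ m : ℕ, α ≠ -m) (p : ℝ) :
    negBinomPMF α p = negBinomMass α p := by
  ext k
  have hΓ : k.factorial * Real.Gamma α ≠ 0 :=
    mul_ne_zero (Nat.cast_ne_zero.2 k.factorial_ne_zero) (Real.Gamma_ne_zero hα)
  rw [negBinomPMF, negBinomMass, Gamma_natCast_add_eq_multichoose hα, mul_div_cancel_right₀ _ hΓ]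

lemma negBinomMeasure_eq_natMassMeasure {α : ℝ} (hα : ∀ m : ℕ, α ≠ -m) (p : ℝ) :
    negBinomMeasure α p = natMassMeasure (negBinomMass α p) := by
  rw [negBinomMeasure, negBinomPMF_eq_negBinomMass hα, natMassMeasure]

lemma negBinomMass_nonneg {r p : ℝ} (hr : 0 ≤ r) (hp : 0 ≤ p) (hp1 : p ≤ 1) (k : ℕ) :
    0 ≤ negBinomMass r p k :=
  mul_nonneg (mul_nonneg (multichoose_nonneg hr k) (Real.rpow_nonneg hp r))
    (pow_nonneg (sub_nonneg.2 hp1) k)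

lemma hasSum_negBinomMass (r : ℝ) {p : ℝ} (hp : 0 < p) (hp1 : p ≤ 1) :
    HasSum (negBinomMass r p) 1 := by
  have h_ball : 1 - p ∈ Metric.eball (0 : ℝ) 1 := by
    rw [mem_eball_zero_iff, ← ofReal_norm, ENNReal.ofReal_lt_one, Real.norm_of_nonneg] <;> linarith
  have h := (Real.one_div_one_sub_rpow_hasFPowerSeriesOnBall_zero r).hasSum h_ball
  replace h := h.mul_left (p ^ r)
  simp only [FormalMultilinearSeries.ofScalars_apply_eq, smul_eq_mul, ← Ring.multichoose_eq,
    zero_add, sub_sub_cancel, mul_one_div_cancel (Real.rpow_pos_of_pos hp r).ne'] at h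
  exact h.congr_fun fun k ↦ by rw [negBinomMass]; ring

lemma sum_antidiagonal_negBinomMass_mul (r s : ℝ) {p : ℝ} (hp : 0 < p) (n : ℕ) :
    ∑ x ∈ antidiagonal n, negBinomMass r p x.1 * negBinomMass s p x.2 =
      negBinomMass (r + s) p n := by
  rw [negBinomMass, multichoose_add, Finset.sum_mul, Finset.sum_mul]
  refine Finset.sum_congr rfl fun x hx ↦ ?_
  rw [negBinomMass, negBinomMass, Real.rpow_add hp, ← mem_antidiagonal.1 hx, pow_add]
  ring

lemma sum_antidiagonal_negBinomMass_mul_add (r : ℝ) {p q : ℝ} (hp : 0 ≤ p) (hq : 0 < q) (n : ℕ) :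
    ∑ x ∈ antidiagonal n, negBinomMass r p x.1 * negBinomMass (r + x.1) q x.2 =
      negBinomMass r (p * q) n := by
  have h_base : 1 - p * q = (1 - p) * q + (1 - q) := by ring
  rw [negBinomMass, h_base, (Commute.all _ _).add_pow', Finset.mul_sum]
  refine Finset.sum_congr rfl fun x hx ↦ ?_
  have h_coeff := multichoose_mul_multichoose_add_natCast r x.1 x.2
  rw [mem_antidiagonal.1 hx] at h_coeff
  rw [negBinomMass, negBinomMass, Real.mul_rpow hp hq.le, Real.rpow_add_natCast hq.ne',
    nsmul_eq_mul, mul_pow]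
  linear_combination
    p ^ r * (1 - p) ^ x.1 * q ^ r * q ^ x.1 * (1 - q) ^ x.2 * h_coeff

lemma natMassMeasure_negBinomMass_conv {r s p : ℝ} (hr : 0 ≤ r) (hs : 0 ≤ s) (hp : 0 < p)
    (hp1 : p ≤ 1) :
    natMassMeasure (negBinomMass r p) ∗ natMassMeasure (negBinomMass s p) =
      natMassMeasure (negBinomMass (r + s) p) := by
  rw [natMassMeasure_conv_natMassMeasure (negBinomMass_nonneg hr hp.le hp1)
    (negBinomMass_nonneg hs hp.le hp1)]
  simp only [sum_antidiagonal_negBinomMass_mul r s hp]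

lemma shiftMixture_negBinomMass_add {r p q : ℝ} (hr : 0 ≤ r) (hp : 0 ≤ p) (hp1 : p ≤ 1)
    (hq : 0 < q) (hq1 : q ≤ 1) :
    shiftMixture (negBinomMass r p) (fun l ↦ natMassMeasure (negBinomMass (r + l) q)) =
      natMassMeasure (negBinomMass r (p * q)) := by
  rw [shiftMixture_natMassMeasure (negBinomMass_nonneg hr hp hp1) fun l ↦
    negBinomMass_nonneg (add_nonneg hr l.cast_nonneg) hq.le hq1]
  simp only [sum_antidiagonal_negBinomMass_mul_add r hp hq]

theorem natMassMeasure_negBinomMass_conv_negBinomCompound {r p q : ℝ} (hr : 0 ≤ r) (hp : 0 ≤ p)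
    (hp1 : p ≤ 1) (hq : 0 < q) (hq1 : q ≤ 1) :
    natMassMeasure (negBinomMass r q) ∗ negBinomCompound r p q =
      natMassMeasure (negBinomMass r (p * q)) := by
  rw [negBinomCompound, conv_shiftMixture]
  simp only [natMassMeasure_negBinomMass_conv hr (Nat.cast_nonneg _) hq hq1]
  exact shiftMixture_negBinomMass_add hr hp hp1 hq hq1

lemma isProbabilityMeasure_negBinomCompound {r p q : ℝ} (hr : 0 ≤ r) (hp : 0 < p) (hp1 : p ≤ 1)
    (hq : 0 < q) (hq1 : q ≤ 1) :
    IsProbabilityMeasure (negBinomCompound r p q) := by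
  have (l : ℕ) : IsProbabilityMeasure (natMassMeasure (negBinomMass l q)) :=
    isProbabilityMeasure_natMassMeasure (negBinomMass_nonneg l.cast_nonneg hq.le hq1)
      (hasSum_negBinomMass l hq hq1)
  exact isProbabilityMeasure_shiftMixture (negBinomMass_nonneg hr hp.le hp1)
    (hasSum_negBinomMass r hp hp1)

lemma negBinomCompound_Iio_zero (r p q : ℝ) : negBinomCompound r p q (Set.Iio 0) = 0 :=
  shiftMixture_Iio_zero _ fun _ ↦ natMassMeasure_Iio_zero _

end NegBinom

/-- Convolution order for negative binomials in the success probability. -/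
theorem negBinom_prob_conv_order (α p₁ p₂ : ℝ) (hα : 0 < α) (h2 : 0 < p₂)
    (h1 : p₂ < p₁) (h1' : p₁ < 1) :
    ConvLE (negBinomMeasure α p₁) (negBinomMeasure α p₂) := by
  have hα_ne (m : ℕ) : α ≠ -m := ((neg_nonpos.2 m.cast_nonneg).trans_lt hα).ne'
  have hp₁ : 0 < p₁ := h2.trans h1
  have hp : 0 < p₂ / p₁ := div_pos h2 hp₁
  have hp_le : p₂ / p₁ ≤ 1 := (div_le_one hp₁).2 h1.le
  refine ⟨negBinomCompound α (p₂ / p₁) p₁,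
    isProbabilityMeasure_negBinomCompound hα.le hp hp_le hp₁ h1'.le,
    negBinomCompound_Iio_zero _ _ _, ?_⟩
  rw [negBinomMeasure_eq_natMassMeasure hα_ne, negBinomMeasure_eq_natMassMeasure hα_ne,
    natMassMeasure_negBinomMass_conv_negBinomCompound hα.le hp.le hp_le hp₁ h1'.le,
    div_mul_cancel₀ _ hp₁.ne']
end

section
/- Let α > 0 and suppose (p₁₁, p₁₂) is majorized by (p₂₁, p₂₂), with all four values in (0,1). Then N_{α,p₁₁} + N_{α,p₁₂} ≤_conv N_{α,p₂₁} + N_{α,p₂₂}, where summands are independent. -/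
open MeasureTheory ProbabilityTheory Real

/-!
The generating function `F` of `N_{α₁,p₁} + N_{α₂,p₂}` satisfies `F' = U * F`, where `U` has
coefficients `α₁ (1 - p₁)ᵏ⁺¹ + α₂ (1 - p₂)ᵏ⁺¹`. Hence the quotient `Q` of two such generating
functions satisfies `Q' = (V - U) * Q`, and the coefficients of `Q` are nonnegative as soon as those
of `V - U` are. Then `Q` is the generating function of the required summand. Under majorization,
`V - U` has nonnegative coefficients because `p ↦ (1 - p)ᵏ⁺¹` is convex.
-/

theorem convexOn_add_le_add_of_mem_segment {𝕜 E β : Type*} [CommRing 𝕜] [PartialOrder 𝕜]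
    [AddCommGroup E] [Module 𝕜 E] [AddCommGroup β] [PartialOrder β] [IsOrderedAddMonoid β]
    [Module 𝕜 β] {s : Set E} {f : E → β} (hf : ConvexOn 𝕜 s f) {x y z w : E} (hz : z ∈ s)
    (hw : w ∈ s) (hx : x ∈ segment 𝕜 z w) (hsum : x + y = z + w) : f x + f y ≤ f z + f w := by
  obtain ⟨a, b, ha, hb, hab, rfl⟩ := hx
  have hy : y = b • z + a • w := by
    rw [eq_sub_of_add_eq' hsum, eq_sub_of_add_eq' hab]
    module
  calc f (a • z + b • w) + f y
      ≤ (a • f z + b • f w) + (b • f z + a • f w) := by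
        rw [hy]
        exact add_le_add (hf.2 hz hw ha hb hab) (hf.2 hz hw hb ha (by rwa [add_comm]))
    _ = (a + b) • f z + (a + b) • f w := by module
    _ = f z + f w := by rw [hab, one_smul, one_smul]

theorem mem_segment_of_add_eq_of_max_le {𝕜 : Type*} [Field 𝕜] [LinearOrder 𝕜]
    [IsStrictOrderedRing 𝕜] {x y z w : 𝕜} (hsum : x + y = z + w)
    (hmax : max x y ≤ max z w) : x ∈ segment 𝕜 z w := by
  have hx : x ≤ max z w := (le_max_left x y).trans hmax
  have hy : y ≤ max z w := (le_max_right x y).trans hmax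
  have hzw : min z w + max z w = z + w := min_add_max z w
  rw [segment_eq_uIcc]
  exact ⟨show min z w ≤ x by linarith, hx⟩

theorem convexOn_one_sub_pow {𝕜 : Type*} [CommRing 𝕜] [LinearOrder 𝕜] [IsStrictOrderedRing 𝕜]
    (n : ℕ) : ConvexOn 𝕜 (Set.Iic 1) fun x : 𝕜 => (1 - x) ^ n :=
  ((convexOn_const 1 (convex_Iic 1)).sub (concaveOn_id (convex_Iic 1))).pow
    (fun _ hx => sub_nonneg.2 hx) n

section LogarithmicDerivative

open PowerSeries
open Finset.HasAntidiagonal (antidiagonal mem_antidiagonal)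

theorem derivative_mk_eq_geometric_mul {R : Type*} [CommSemiring R] {a q : R} {c : ℕ → R}
    (hc : ∀ n : ℕ, c (n + 1) * (n + 1) = q * (n + a) * c n) :
    d⁄dX R (mk c) = mk (fun k => a * q ^ (k + 1)) * mk c := by
  ext n
  rw [coeff_derivative, coeff_mk]
  induction n with
  | zero => simpa [coeff_mul, mul_comm a q] using hc 0
  | succ n ih =>
    have hshift : coeff (n + 1) (mk (fun k => a * q ^ (k + 1)) * mk c)
        = a * q * c (n + 1) + q * coeff n (mk (fun k => a * q ^ (k + 1)) * mk c) := by
      simp only [coeff_mul, coeff_mk, Finset.Nat.sum_antidiagonal_succ, Finset.mul_sum, zero_add,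
        pow_one]
      congr 1
      exact Finset.sum_congr rfl fun _ _ => by ring
    rw [hshift, ← ih, hc (n + 1)]
    push_cast
    ring

theorem derivative_mul_eq_add_mul {R : Type*} [CommSemiring R] {F G U V : R⟦X⟧}
    (hF : d⁄dX R F = U * F) (hG : d⁄dX R G = V * G) :
    d⁄dX R (F * G) = (U + V) * (F * G) := by
  rw [Derivation.leibniz, hF, hG, smul_eq_mul, smul_eq_mul]
  ring

theorem derivative_inv_eq_neg_mul {K : Type*} [Field K] {F U : K⟦X⟧}
    (h0 : constantCoeff F ≠ 0) (hF : d⁄dX K F = U * F) : d⁄dX K F⁻¹ = -U * F⁻¹ := by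
  rw [derivative_inv', hF]
  linear_combination -F⁻¹ * U * PowerSeries.inv_mul_cancel F h0

theorem coeff_mul_nonneg {R : Type*} [Semiring R] [PartialOrder R] [IsOrderedRing R] {F G : R⟦X⟧}
    (hF : ∀ n, 0 ≤ coeff n F) (hG : ∀ n, 0 ≤ coeff n G) (n : ℕ) : 0 ≤ coeff n (F * G) := by
  rw [coeff_mul]
  exact Finset.sum_nonneg fun i _ => mul_nonneg (hF i.1) (hG i.2)

theorem coeff_nonneg_of_derivative_eq_mul {R : Type*} [CommSemiring R] [LinearOrder R]
    [IsStrictOrderedRing R] {F H : R⟦X⟧} (hH : ∀ n, 0 ≤ coeff n H)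
    (h0 : 0 ≤ constantCoeff F) (hF : d⁄dX R F = H * F) (n : ℕ) : 0 ≤ coeff n F := by
  induction n using Nat.strong_induction_on with
  | _ n ih =>
    cases n with
    | zero => rwa [coeff_zero_eq_constantCoeff]
    | succ n =>
      have hrec : coeff (n + 1) F * (n + 1)
          = ∑ i ∈ antidiagonal n, coeff i.1 H * coeff i.2 F := by
        rw [← coeff_derivative, hF, coeff_mul]
      refine nonneg_of_mul_nonneg_left (hrec.symm ▸ Finset.sum_nonneg fun i hi => ?_)
        (by positivity : (0 : R) < n + 1)
      refine mul_nonneg (hH _) (ih _ (Nat.lt_succ_of_le ?_))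
      exact (Nat.le_add_left _ _).trans_eq (mem_antidiagonal.1 hi)

theorem coeff_mul_inv_nonneg_of_logDeriv_le {𝕜 : Type*} [Field 𝕜] [LinearOrder 𝕜]
    [IsStrictOrderedRing 𝕜] {F G U V : 𝕜⟦X⟧} (hF0 : 0 < constantCoeff F) (hG0 : 0 ≤ constantCoeff G)
    (hF : d⁄dX 𝕜 F = U * F) (hG : d⁄dX 𝕜 G = V * G)
    (hUV : ∀ n, coeff n U ≤ coeff n V) (n : ℕ) : 0 ≤ coeff n (G * F⁻¹) := by
  refine coeff_nonneg_of_derivative_eq_mul (H := V + -U) (fun k => ?_) ?_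
    (derivative_mul_eq_add_mul hG (derivative_inv_eq_neg_mul hF0.ne' hF)) n
  · rw [map_add, map_neg, ← sub_eq_add_neg]
    exact sub_nonneg.2 (hUV k)
  · rw [map_mul, constantCoeff_inv]
    exact mul_nonneg hG0 (inv_nonneg.2 hF0.le)

end LogarithmicDerivative

section GeneratingFunction

open PowerSeries
open Finset.HasAntidiagonal (antidiagonal mem_antidiagonal)

theorem isProbabilityMeasure_of_conv {M : Type*} [AddMonoid M] [MeasurableSpace M]
    [MeasurableAdd₂ M] (μ ρ : Measure M) [IsProbabilityMeasure μ] [SFinite ρ]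
    [IsProbabilityMeasure (μ.conv ρ)] : IsProbabilityMeasure ρ := by
  have h : (μ.conv ρ) Set.univ = μ Set.univ * ρ Set.univ := by
    rw [Measure.conv, Measure.map_apply measurable_add .univ, Set.preimage_univ,
      ← Set.univ_prod_univ, Measure.prod_prod]
  exact ⟨by simpa only [measure_univ, one_mul] using h.symm⟩

/-- The measure on `ℝ` supported on `ℕ` with generating function `F`: it gives `k : ℕ` the mass
`coeff k F`, negative coefficients being replaced by `0`. -/
noncomputable def measureOfGenFun (F : ℝ⟦X⟧) : Measure ℝ :=
  Measure.sum fun k : ℕ => ENNReal.ofReal (coeff k F) • Measure.dirac (k : ℝ)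

instance (F : ℝ⟦X⟧) : SFinite (measureOfGenFun F) := by
  unfold measureOfGenFun
  infer_instance

theorem measureOfGenFun_Iio_zero (F : ℝ⟦X⟧) : measureOfGenFun F (Set.Iio 0) = 0 := by
  simp [measureOfGenFun, Measure.sum_apply _ measurableSet_Iio]

theorem lintegral_measureOfGenFun (F : ℝ⟦X⟧) {f : ℝ → ENNReal} (hf : Measurable f) :
    ∫⁻ x, f x ∂(measureOfGenFun F) = ∑' k : ℕ, ENNReal.ofReal (coeff k F) * f k := by
  simp [measureOfGenFun, lintegral_sum_measure, lintegral_smul_measure, lintegral_dirac' _ hf]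

theorem tsum_tsum_eq_tsum_sum_antidiagonal {A : Type*} [AddMonoid A]
    [Finset.HasAntidiagonal A] (g : A × A → ENNReal) :
    ∑' i, ∑' j, g (i, j) = ∑' n, ∑ x ∈ antidiagonal n, g x := by
  rw [← ENNReal.tsum_prod (f := fun i j => g (i, j)),
    ← Finset.HasAntidiagonal.sigmaAntidiagonalEquivProd.tsum_eq, ENNReal.tsum_sigma']
  refine tsum_congr fun n => ?_
  rw [tsum_fintype]
  exact Finset.sum_coe_sort (antidiagonal n) g

theorem measureOfGenFun_mul {F G : ℝ⟦X⟧} (hF : ∀ n, 0 ≤ coeff n F) (hG : ∀ n, 0 ≤ coeff n G) :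
    measureOfGenFun (F * G) = (measureOfGenFun F).conv (measureOfGenFun G) := by
  refine Measure.ext_of_lintegral _ fun f hf => ?_
  have hinner (i : ℕ) : ∫⁻ y, f (i + y) ∂(measureOfGenFun G)
      = ∑' j : ℕ, ENNReal.ofReal (coeff j G) * f (i + j) :=
    lintegral_measureOfGenFun G (by fun_prop)
  have hcoeff (n : ℕ) : ENNReal.ofReal (coeff n (F * G)) * f n
      = ∑ x ∈ antidiagonal n,
        ENNReal.ofReal (coeff x.1 F) * (ENNReal.ofReal (coeff x.2 G) * f (x.1 + x.2)) := by
    rw [coeff_mul, ENNReal.ofReal_sum_of_nonneg fun x _ => mul_nonneg (hF x.1) (hG x.2),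
      Finset.sum_mul]
    refine Finset.sum_congr rfl fun x hx => ?_
    rw [ENNReal.ofReal_mul (hF x.1), mul_assoc, ← mem_antidiagonal.1 hx, Nat.cast_add]
  rw [Measure.lintegral_conv hf, lintegral_measureOfGenFun _ hf,
    lintegral_measureOfGenFun F (by fun_prop)]
  simp_rw [hinner, hcoeff, ← ENNReal.tsum_mul_left]
  exact (tsum_tsum_eq_tsum_sum_antidiagonal fun x =>
    ENNReal.ofReal (coeff x.1 F) * (ENNReal.ofReal (coeff x.2 G) * f (x.1 + x.2))).symm

theorem convLE_measureOfGenFun_of_logDeriv_le {F G U V : ℝ⟦X⟧} (hFn : ∀ n, 0 ≤ coeff n F)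
    (hF0 : 0 < constantCoeff F) (hG0 : 0 ≤ constantCoeff G)
    (hF : d⁄dX ℝ F = U * F) (hG : d⁄dX ℝ G = V * G) (hUV : ∀ n, coeff n U ≤ coeff n V)
    [IsProbabilityMeasure (measureOfGenFun F)] [IsProbabilityMeasure (measureOfGenFun G)] :
    ConvLE (measureOfGenFun F) (measureOfGenFun G) := by
  have hconv : measureOfGenFun G = (measureOfGenFun F).conv (measureOfGenFun (G * F⁻¹)) := by
    rw [← measureOfGenFun_mul hFn (coeff_mul_inv_nonneg_of_logDeriv_le hF0 hG0 hF hG hUV),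
      mul_left_comm, PowerSeries.mul_inv_cancel F hF0.ne', mul_one]
  have : IsProbabilityMeasure ((measureOfGenFun F).conv (measureOfGenFun (G * F⁻¹))) :=
    hconv ▸ inferInstance
  exact ⟨measureOfGenFun (G * F⁻¹), isProbabilityMeasure_of_conv (measureOfGenFun F) _,
    measureOfGenFun_Iio_zero _, hconv⟩

end GeneratingFunction

section NegativeBinomial

open PowerSeries

theorem Gamma_natCast_add {a : ℝ} (ha : ∀ m : ℕ, a ≠ -m) (n : ℕ) :
    Gamma (n + a) = (ascPochhammer ℝ n).eval a * Gamma a := by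
  induction n with
  | zero => simp
  | succ n ih =>
    have hne : (n + a : ℝ) ≠ 0 := fun h => ha n (eq_neg_of_add_eq_zero_right h)
    rw [Nat.cast_succ, add_right_comm, Gamma_add_one hne, ih, ascPochhammer_succ_eval]
    ring

theorem Gamma_natCast_add_div_eq_choose {a : ℝ} (ha : ∀ m : ℕ, a ≠ -m) (n : ℕ) :
    Gamma (n + a) / (n.factorial * Gamma a) = Ring.choose (a + n - 1) n := by
  have hfac : (n.factorial : ℝ) * Ring.multichoose a n = (ascPochhammer ℝ n).eval a := by
    rw [← nsmul_eq_mul, Ring.factorial_nsmul_multichoose_eq_ascPochhammer,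
      Polynomial.ascPochhammer_smeval_eq_eval]
  rw [Gamma_natCast_add ha, mul_div_mul_right _ _ (Gamma_ne_zero ha), ← Ring.multichoose_eq,
    ← hfac, mul_div_cancel_left₀ _ (by positivity)]

variable {α p : ℝ}

theorem negBinomPMF_nonneg (hα : 0 < α) (hp : p ∈ Set.Ioc (0 : ℝ) 1) (k : ℕ) :
    0 ≤ negBinomPMF α p k := by
  have hp0 : 0 < p := hp.1
  have hq : 0 ≤ 1 - p := sub_nonneg.2 hp.2
  unfold negBinomPMF
  positivity

theorem negBinomPMF_zero (hα : 0 < α) : negBinomPMF α p 0 = p ^ α := by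
  simp [negBinomPMF, (Gamma_pos_of_pos hα).ne']

theorem negBinomPMF_succ_mul (hα : 0 < α) (n : ℕ) :
    negBinomPMF α p (n + 1) * (n + 1) = (1 - p) * (n + α) * negBinomPMF α p n := by
  have hΓ : Gamma ((n + 1 : ℕ) + α) = (n + α) * Gamma (n + α) := by
    rw [Nat.cast_succ, add_right_comm, Gamma_add_one (by positivity)]
  have hΓα : Gamma α ≠ 0 := (Gamma_pos_of_pos hα).ne'
  rw [negBinomPMF, negBinomPMF, hΓ, Nat.factorial_succ]
  push_cast
  field_simp
  ring

theorem hasSum_negBinomPMF (hα : 0 < α) (hp : p ∈ Set.Ioc (0 : ℝ) 1) :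
    HasSum (negBinomPMF α p) 1 := by
  have hα' (m : ℕ) : α ≠ -m := (neg_nonpos.2 m.cast_nonneg |>.trans_lt hα).ne'
  have hq : (1 - p : ℝ) ∈ Metric.eball 0 1 := by
    have : |1 - p| < 1 := abs_lt.2 ⟨by linarith [hp.2], by linarith [hp.1]⟩
    simpa [Metric.mem_eball, edist_zero_right, ← ofReal_norm] using this
  have hbinom : HasSum (fun n : ℕ => Ring.choose (α + n - 1) n * (1 - p) ^ n) (p ^ α)⁻¹ := by
    simpa [FormalMultilinearSeries.ofScalars, mul_comm] using
      (one_div_one_sub_rpow_hasFPowerSeriesOnBall_zero α).hasSum hq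
  have hmass := hbinom.mul_left (p ^ α)
  rw [mul_inv_cancel₀ (rpow_pos_of_pos hp.1 α).ne'] at hmass
  refine hmass.congr_fun fun n => ?_
  rw [negBinomPMF, Gamma_natCast_add_div_eq_choose hα']
  ring

theorem isProbabilityMeasure_negBinomMeasure (hα : 0 < α) (hp : p ∈ Set.Ioc (0 : ℝ) 1) :
    IsProbabilityMeasure (negBinomMeasure α p) :=
  (hasSum_negBinomPMF hα hp).isProbabilityMeasure_sum_dirac (negBinomPMF_nonneg hα hp)

/-- The probability generating function of `N_{α,p}`, as a formal power series. -/
noncomputable def negBinomGenFun (α p : ℝ) : ℝ⟦X⟧ := PowerSeries.mk (negBinomPMF α p)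

theorem coeff_negBinomGenFun_nonneg (hα : 0 < α) (hp : p ∈ Set.Ioc (0 : ℝ) 1) (n : ℕ) :
    0 ≤ coeff n (negBinomGenFun α p) := by
  rw [negBinomGenFun, coeff_mk]
  exact negBinomPMF_nonneg hα hp n

theorem constantCoeff_negBinomGenFun_pos (hα : 0 < α) (hp : 0 < p) :
    0 < constantCoeff (negBinomGenFun α p) := by
  rw [← coeff_zero_eq_constantCoeff_apply, negBinomGenFun, coeff_mk, negBinomPMF_zero hα]
  exact rpow_pos_of_pos hp α

theorem derivative_negBinomGenFun (hα : 0 < α) :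
    d⁄dX ℝ (negBinomGenFun α p)
      = PowerSeries.mk (fun k => α * (1 - p) ^ (k + 1)) * negBinomGenFun α p :=
  derivative_mk_eq_geometric_mul (negBinomPMF_succ_mul hα)

theorem negBinomMeasure_eq_measureOfGenFun (α p : ℝ) :
    negBinomMeasure α p = measureOfGenFun (negBinomGenFun α p) := by
  simp only [negBinomMeasure, measureOfGenFun, negBinomGenFun, coeff_mk]

theorem negBinomMeasure_conv {β r : ℝ} (hα : 0 < α) (hβ : 0 < β) (hp : p ∈ Set.Ioc (0 : ℝ) 1)
    (hr : r ∈ Set.Ioc (0 : ℝ) 1) :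
    (negBinomMeasure α p).conv (negBinomMeasure β r)
      = measureOfGenFun (negBinomGenFun α p * negBinomGenFun β r) := by
  rw [negBinomMeasure_eq_measureOfGenFun, negBinomMeasure_eq_measureOfGenFun,
    measureOfGenFun_mul (coeff_negBinomGenFun_nonneg hα hp) (coeff_negBinomGenFun_nonneg hβ hr)]

theorem isProbabilityMeasure_negBinomGenFun_mul {β r : ℝ} (hα : 0 < α) (hβ : 0 < β)
    (hp : p ∈ Set.Ioc (0 : ℝ) 1) (hr : r ∈ Set.Ioc (0 : ℝ) 1) :
    IsProbabilityMeasure (measureOfGenFun (negBinomGenFun α p * negBinomGenFun β r)) := by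
  have := isProbabilityMeasure_negBinomMeasure hα hp
  have := isProbabilityMeasure_negBinomMeasure hβ hr
  rw [← negBinomMeasure_conv hα hβ hp hr]
  infer_instance

end NegativeBinomial

theorem negBinom_majorize_prob_conv_order_general {α₁₁ α₁₂ α₂₁ α₂₂ p₁₁ p₁₂ p₂₁ p₂₂ : ℝ}
    (hα₁₁ : 0 < α₁₁) (hα₁₂ : 0 < α₁₂) (hα₂₁ : 0 < α₂₁) (hα₂₂ : 0 < α₂₂)
    (h11 : p₁₁ ∈ Set.Ioc (0 : ℝ) 1) (h12 : p₁₂ ∈ Set.Ioc (0 : ℝ) 1)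
    (h21 : p₂₁ ∈ Set.Ioc (0 : ℝ) 1) (h22 : p₂₂ ∈ Set.Ioc (0 : ℝ) 1)
    (hpow : ∀ n : ℕ, α₁₁ * (1 - p₁₁) ^ (n + 1) + α₁₂ * (1 - p₁₂) ^ (n + 1)
      ≤ α₂₁ * (1 - p₂₁) ^ (n + 1) + α₂₂ * (1 - p₂₂) ^ (n + 1)) :
    ConvLE ((negBinomMeasure α₁₁ p₁₁).conv (negBinomMeasure α₁₂ p₁₂))
      ((negBinomMeasure α₂₁ p₂₁).conv (negBinomMeasure α₂₂ p₂₂)) := by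
  have := isProbabilityMeasure_negBinomGenFun_mul hα₁₁ hα₁₂ h11 h12
  have := isProbabilityMeasure_negBinomGenFun_mul hα₂₁ hα₂₂ h21 h22
  rw [negBinomMeasure_conv hα₁₁ hα₁₂ h11 h12, negBinomMeasure_conv hα₂₁ hα₂₂ h21 h22]
  refine convLE_measureOfGenFun_of_logDeriv_le
    (coeff_mul_nonneg (coeff_negBinomGenFun_nonneg hα₁₁ h11)
      (coeff_negBinomGenFun_nonneg hα₁₂ h12)) ?_ ?_
    (derivative_mul_eq_add_mul (derivative_negBinomGenFun hα₁₁) (derivative_negBinomGenFun hα₁₂))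
    (derivative_mul_eq_add_mul (derivative_negBinomGenFun hα₂₁) (derivative_negBinomGenFun hα₂₂))
    fun n => ?_
  · rw [map_mul]
    exact mul_pos (constantCoeff_negBinomGenFun_pos hα₁₁ h11.1)
      (constantCoeff_negBinomGenFun_pos hα₁₂ h12.1)
  · rw [map_mul]
    exact (mul_pos (constantCoeff_negBinomGenFun_pos hα₂₁ h21.1)
      (constantCoeff_negBinomGenFun_pos hα₂₂ h22.1)).le
  · simpa only [map_add, PowerSeries.coeff_mk] using hpow n

/-- Convolution order under majorization of the success probabilities, common shape. -/
theorem negBinom_majorize_prob_conv_order (α p₁₁ p₁₂ p₂₁ p₂₂ : ℝ) (hα : 0 < α)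
    (h11 : p₁₁ ∈ Set.Ioo (0:ℝ) 1) (h12 : p₁₂ ∈ Set.Ioo (0:ℝ) 1)
    (h21 : p₂₁ ∈ Set.Ioo (0:ℝ) 1) (h22 : p₂₂ ∈ Set.Ioo (0:ℝ) 1)
    (hsum : p₁₁ + p₁₂ = p₂₁ + p₂₂) (hmax : max p₁₁ p₁₂ ≤ max p₂₁ p₂₂) :
    ConvLE ((negBinomMeasure α p₁₁).conv (negBinomMeasure α p₁₂))
      ((negBinomMeasure α p₂₁).conv (negBinomMeasure α p₂₂)) := by
  refine negBinom_majorize_prob_conv_order_general hα hα hα hα (Set.Ioo_subset_Ioc_self h11)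
    (Set.Ioo_subset_Ioc_self h12) (Set.Ioo_subset_Ioc_self h21) (Set.Ioo_subset_Ioc_self h22)
    fun n => ?_
  simp only [← mul_add]
  refine mul_le_mul_of_nonneg_left ?_ hα.le
  exact convexOn_add_le_add_of_mem_segment (convexOn_one_sub_pow (n + 1)) (Set.mem_Iic.2 h21.2.le)
    (Set.mem_Iic.2 h22.2.le) (mem_segment_of_add_eq_of_max_le hsum hmax) hsum
end
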